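/- Let 0 < λ ≤ 1 and let n ≥ 2 be an integer. Let f be analytic on the unit disk 𝔻 with f ∈ 𝓛^{2,λ}, let F(z) = ∫₀ᶻ f(w) dw be its primitive, and assume F ∈ H² with a.e. radial boundary values F*. Then there exists a function F̃ of class C¹ on {z ∈ ℂ : |z| > 1} such that: (a) for a.e. θ ∈ [0,2π], F̃(re^{iθ}) → F*(θ) as r → 1⁺; (b) F̃(z) = O(z^n) as z → ∞; (c) ∂̄F̃(z) = O(z^{n−2}) as z → ∞; and (d) sup_{a∈𝔻} (1 − |a|²)^{1−λ} ∫_{|z|>1} (|∂̄F̃(z)|²/(|z|^n − 1)²) · (1 − 1/|σ_a(z)|²) dA(z) < ∞. -/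

import Mathlib

open MeasureTheory Metric Complex Filter Set
open scoped ENNReal Real Topology

noncomputable section

/-- The Cauchy–Riemann (Wirtinger) operator `∂̄g = (1/2)(∂g/∂x + i ∂g/∂y)`. -/
def dbar (g : ℂ → ℂ) (z : ℂ) : ℂ :=
  (1 / 2 : ℂ) * (fderiv ℝ g z 1 + Complex.I * fderiv ℝ g z Complex.I)

/-- Membership in the Hardy space `H²`. -/
def MemH2 (F : ℂ → ℂ) : Prop :=
  ∃ M : ℝ, ∀ r ∈ Set.Ioo (0 : ℝ) 1,
    (∫ θ in (0 : ℝ)..(2 * Real.pi),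
      ‖F ((r : ℂ) * Complex.exp ((θ : ℂ) * Complex.I))‖ ^ 2) ≤ M

/-- `Fb` is the a.e. radial boundary value function of `F` (from inside). -/
def RadialLimitIn (F : ℂ → ℂ) (Fb : ℝ → ℂ) : Prop :=
  ∀ᵐ (θ : ℝ) ∂(volume.restrict (Set.Ioc (0 : ℝ) (2 * Real.pi))),
    Tendsto (fun r : ℝ => F ((r : ℂ) * Complex.exp ((θ : ℂ) * Complex.I)))
      (𝓝[<] 1) (𝓝 (Fb θ))

/-- `Fb` is the a.e. radial limit function of `G` from outside the circle. -/
def RadialLimitOut (G : ℂ → ℂ) (Fb : ℝ → ℂ) : Prop :=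
  ∀ᵐ (θ : ℝ) ∂(volume.restrict (Set.Ioc (0 : ℝ) (2 * Real.pi))),
    Tendsto (fun r : ℝ => G ((r : ℂ) * Complex.exp ((θ : ℂ) * Complex.I)))
      (𝓝[>] 1) (𝓝 (Fb θ))

/-- `g(z) = O(z^m)` as `z → ∞`. -/
def BigOPow (g : ℂ → ℂ) (m : ℕ) : Prop :=
  ∃ C R : ℝ, 0 < C ∧ 0 < R ∧ ∀ z : ℂ, R ≤ ‖z‖ → ‖g z‖ ≤ C * ‖z‖ ^ m

/-- The Möbius transformation `σ_a(z) = (a - z)/(1 - conj a · z)`. -/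
def mobius (a z : ℂ) : ℂ := (a - z) / (1 - (starRingEnd ℂ) a * z)

/-- Membership in the analytic Morrey space `𝓛^{2,λ}`, via the integral
characterization. -/
def MemMorrey (lam : ℝ) (f : ℂ → ℂ) : Prop :=
  (⨆ a ∈ ball (0 : ℂ) 1, ENNReal.ofReal ((1 - ‖a‖ ^ 2) ^ (1 - lam)) *
    ∫⁻ z in ball (0 : ℂ) 1,
      ENNReal.ofReal (‖deriv f z‖ ^ 2 * (1 - ‖mobius a z‖ ^ 2))) < ⊤

/-!
Reflect `z` in the unit circle, `z* = 1 / conj z`, and put `F̃(z) = F(z*) + (z - z*) F'(z*)`.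
Differentiating, the terms containing `F'(z*)` cancel and `∂̄F̃(z) = (z - z*) F''(z*) ∂̄z*` remains.
Since `|z - z*| = |z| - 1/|z| ≤ |z|^n - 1` and `|σ_a(z*)| = 1/|σ_a(z)|`, while `|∂̄z*|² = |z|⁻⁴` is
the Jacobian of the reflection, each exterior integral is at most the corresponding Morrey integral
of `f = F'`. For the boundary values one needs `(1 - |z|) f(z) → 0` as `|z| → 1`: the Morrey
condition at `a = 0` and the sub-mean value property of `|f'|²` give `|f'(z)| ≲ (1 - |z|)^(-3/2)`,
and integrating along radii `|f(z)| ≲ (1 - |z|)^(-1/2)`.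
-/

open Asymptotics Bornology EuclideanGeometry
open scoped ComplexConjugate

section SubMeanValue

lemma lintegral_ball_eq_lintegral_circleMap {h : ℂ → ℝ≥0∞} {c : ℂ} {R : ℝ}
    (hh : Measurable ((ball c R).indicator h)) :
    ∫⁻ z in ball c R, h z =
      ∫⁻ ρ in Ioo 0 R, ENNReal.ofReal ρ * ∫⁻ θ in Ioo (-π) π, h (circleMap c ρ θ) := by
  have polar_eq (p : ℝ × ℝ) : c + Complex.polarCoord.symm p = circleMap c p.1 p.2 := by
    simp [Complex.polarCoord_symm_apply, circleMap, Complex.exp_mul_I]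
  have measurable_polar : Measurable fun p : ℝ × ℝ =>
      ENNReal.ofReal p.1 • (ball c R).indicator h (circleMap c p.1 p.2) := by
    refine (ENNReal.measurable_ofReal.comp measurable_fst).smul (hh.comp ?_)
    unfold circleMap
    fun_prop
  rw [← lintegral_indicator measurableSet_ball, ← lintegral_add_left_eq_self _ c,
    ← Complex.lintegral_comp_polarCoord_symm]
  simp only [polar_eq, polarCoord_target, Measure.volume_eq_prod]
  have Ioo_eq : Ioo 0 R = Iio R ∩ Ioi 0 := by rw [inter_comm, Ioi_inter_Iio]
  rw [setLIntegral_prod _ measurable_polar.aemeasurable, Ioo_eq,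
    ← setLIntegral_indicator measurableSet_Iio]
  refine setLIntegral_congr_fun measurableSet_Ioi fun ρ (hρ : 0 < ρ) => ?_
  have mem_ball_iff (θ : ℝ) : circleMap c ρ θ ∈ ball c R ↔ ρ ∈ Iio R := by
    simp [dist_eq_norm, abs_of_pos hρ]
  by_cases h_lt : ρ ∈ Iio R <;>
    simp [indicator, mem_ball_iff, h_lt, lintegral_const_mul']

variable {E : Type*} [NormedAddCommGroup E] [NormedSpace ℂ E] [CompleteSpace E]

lemma ofReal_two_pi_mul_enorm_le_lintegral_circleMap {g : ℂ → E} {c : ℂ} {R : ℝ}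
    (hg : DiffContOnCl ℂ g (ball c |R|)) :
    ENNReal.ofReal (2 * π) * ‖g c‖ₑ ≤ ∫⁻ θ in Ioo (-π) π, ‖g (circleMap c R θ)‖ₑ := by
  have mean_value : (2 * π) • g c = ∫ θ in Ioo (-π) π, g (circleMap c R θ) := by
    have periodic : Function.Periodic (fun θ => g (circleMap c R θ)) (2 * π) :=
      (periodic_circleMap c R).comp g
    rw [← hg.circleAverage, Real.circleAverage_def, smul_inv_smul₀ Real.two_pi_pos.ne',
      ← zero_add (2 * π), periodic.intervalIntegral_add_eq 0 (-π),
      intervalIntegral.integral_of_le (by linarith [Real.pi_pos]), integral_Ioc_eq_integral_Ioo,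
      show -π + 2 * π = π by ring]
  rw [← Real.enorm_of_nonneg Real.two_pi_pos.le, ← enorm_smul, mean_value]
  exact enorm_integral_le_lintegral_enorm _

lemma volume_ball_mul_enorm_le_lintegral_ball {g : ℂ → E} {c : ℂ} {R : ℝ}
    (hg : DifferentiableOn ℂ g (ball c R)) :
    volume (ball c R) * ‖g c‖ₑ ≤ ∫⁻ z in ball c R, ‖g z‖ₑ := by
  have measurable_enorm : Measurable ((ball c R).indicator fun z => ‖g z‖ₑ) := by
    classical
    rw [← piecewise_eq_indicator]
    exact hg.continuousOn.enorm.measurable_piecewise continuousOn_const measurableSet_ball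
  rw [mul_comm, ← setLIntegral_const, lintegral_ball_eq_lintegral_circleMap measurable_enorm,
    lintegral_ball_eq_lintegral_circleMap (measurable_const.indicator measurableSet_ball)]
  refine setLIntegral_mono' measurableSet_Ioo fun ρ hρ => ?_
  have h_closure : closure (ball c |ρ|) ⊆ ball c R := by
    rw [abs_of_pos hρ.1]
    exact closure_ball_subset_closedBall.trans (closedBall_subset_ball hρ.2)
  gcongr ENNReal.ofReal ρ * ?_
  calc ∫⁻ _ in Ioo (-π) π, ‖g c‖ₑ = ENNReal.ofReal (2 * π) * ‖g c‖ₑ := by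
        rw [setLIntegral_const, Real.volume_Ioo, mul_comm]
        ring_nf
    _ ≤ _ := ofReal_two_pi_mul_enorm_le_lintegral_circleMap (hg.mono h_closure).diffContOnCl

end SubMeanValue

section Growth

lemma exists_norm_pow_mul_one_sub_norm_pow_le {g : ℂ → ℂ}
    (hg : DifferentiableOn ℂ g (ball 0 1)) (p q : ℕ)
    (h_int : ∫⁻ z in ball (0 : ℂ) 1, ENNReal.ofReal (‖g z‖ ^ p * (1 - ‖z‖ ^ 2) ^ q) < ⊤) :
    ∃ C : ℝ, ∀ z ∈ ball (0 : ℂ) 1, ‖g z‖ ^ p * (1 - ‖z‖) ^ (q + 2) ≤ C := by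
  set K := ∫⁻ z in ball (0 : ℂ) 1, ENNReal.ofReal (‖g z‖ ^ p * (1 - ‖z‖ ^ 2) ^ q)
  refine ⟨2 ^ (q + 2) * (K.toReal / π), fun z hz => ?_⟩
  obtain ⟨R, hR⟩ : ∃ R, R = (1 - ‖z‖) / 2 := ⟨_, rfl⟩
  have hR_pos : 0 < R := by
    rw [mem_ball_zero_iff] at hz
    linarith
  have norm_lt {u : ℂ} (hu : u ∈ ball z R) : ‖u‖ < 1 - R := by
    linarith [norm_le_norm_add_norm_sub z u, mem_ball_iff_norm'.1 hu]
  have h_sub : ball z R ⊆ ball 0 1 := fun u hu => by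
    rw [mem_ball_zero_iff]
    linarith [norm_lt hu]
  have h_mean : volume (ball z R) * ‖g z ^ p‖ₑ ≤ ∫⁻ u in ball z R, ‖g u ^ p‖ₑ :=
    volume_ball_mul_enorm_le_lintegral_ball ((hg.mono h_sub).pow p)
  have h_weight : ENNReal.ofReal (R ^ q) * ∫⁻ u in ball z R, ‖g u ^ p‖ₑ ≤ K := by
    rw [← lintegral_const_mul' _ _ ENNReal.ofReal_ne_top]
    refine (setLIntegral_mono' measurableSet_ball fun u hu => ?_).trans (lintegral_mono_set h_sub)
    rw [← ofReal_norm, ← ENNReal.ofReal_mul (by positivity), norm_pow, mul_comm]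
    have : R ≤ 1 - ‖u‖ ^ 2 := by nlinarith [norm_lt hu, norm_nonneg u]
    gcongr
  have h_real : R ^ q * (R ^ 2 * π * ‖g z‖ ^ p) ≤ K.toReal := by
    have := ENNReal.toReal_mono h_int.ne ((mul_le_mul_right h_mean _).trans h_weight)
    simpa [hR_pos.le] using this
  calc ‖g z‖ ^ p * (1 - ‖z‖) ^ (q + 2)
      = 2 ^ (q + 2) * (R ^ q * (R ^ 2 * π * ‖g z‖ ^ p) / π) := by
        rw [show 1 - ‖z‖ = 2 * R by linarith]
        field_simp
        ring
    _ ≤ 2 ^ (q + 2) * (K.toReal / π) := by gcongr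

lemma norm_le_add_rpow_of_norm_deriv_le_rpow {E : Type*} [NormedAddCommGroup E] [NormedSpace ℂ E]
    {f : ℂ → E} (hf : DifferentiableOn ℂ f (ball 0 1)) {C α : ℝ} (hα : 0 < α)
    (h_deriv : ∀ z ∈ ball (0 : ℂ) 1, ‖deriv f z‖ ≤ C * (1 - ‖z‖) ^ (-α - 1)) :
    ∀ z ∈ ball (0 : ℂ) 1, ‖f z‖ ≤ ‖f 0‖ + C / α * (1 - ‖z‖) ^ (-α) := by
  intro z hz
  have hC : 0 ≤ C := by simpa using (norm_nonneg _).trans (h_deriv 0 (mem_ball_self one_pos))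
  have norm_smul_z {s : ℝ} (hs : s ∈ Icc (0 : ℝ) 1) : ‖s * z‖ = s * ‖z‖ := by
    simp [abs_of_nonneg hs.1]
  have norm_lt {s : ℝ} (hs : s ∈ Icc (0 : ℝ) 1) : s * ‖z‖ < 1 :=
    (mul_le_of_le_one_left (norm_nonneg z) hs.2).trans_lt (mem_ball_zero_iff.1 hz)
  have mem_ball {s : ℝ} (hs : s ∈ Icc (0 : ℝ) 1) : (s * z : ℂ) ∈ ball (0 : ℂ) 1 := by
    rw [mem_ball_zero_iff, norm_smul_z hs]
    exact norm_lt hs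
  have hasDerivAt_ray {s : ℝ} (hs : s ∈ Icc (0 : ℝ) 1) :
      HasDerivAt (fun s : ℝ => f (s * z)) (z • deriv f (s * z)) s :=
    (hf.differentiableAt (isOpen_ball.mem_nhds (mem_ball hs))).hasDerivAt.scomp s
      (hasDerivAt_mul_const z).comp_ofReal
  have hasDerivAt_majorant {s : ℝ} (hs : s ∈ Icc (0 : ℝ) 1) :
      HasDerivAt (fun s : ℝ => ‖f 0‖ + C / α * (1 - s * ‖z‖) ^ (-α))
        (‖z‖ * (C * (1 - s * ‖z‖) ^ (-α - 1))) s := by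
    refine ((((hasDerivAt_mul_const ‖z‖).const_sub 1).rpow_const
      (Or.inl (sub_pos.2 (norm_lt hs)).ne')).const_mul (C / α)).const_add ‖f 0‖ |>.congr_deriv ?_
    field_simp
  have h_fence := image_norm_le_of_norm_deriv_right_le_deriv_boundary'
    (fun s hs => (hasDerivAt_ray hs).continuousAt.continuousWithinAt)
    (fun s hs => (hasDerivAt_ray (Ico_subset_Icc_self hs)).hasDerivWithinAt)
    (by simpa using div_nonneg hC hα.le)
    (fun s hs => (hasDerivAt_majorant hs).continuousAt.continuousWithinAt)
    (fun s hs => (hasDerivAt_majorant (Ico_subset_Icc_self hs)).hasDerivWithinAt)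
    (fun s hs => by
      rw [norm_smul, ← norm_smul_z (Ico_subset_Icc_self hs)]
      gcongr
      exact h_deriv _ (mem_ball (Ico_subset_Icc_self hs)))
  simpa using h_fence (right_mem_Icc.2 zero_le_one)

lemma tendsto_one_sub_norm_mul_norm_of_le {E E' : Type*} [SeminormedAddCommGroup E]
    [SeminormedAddCommGroup E'] {f : E → E'} {A B α : ℝ} (hα : α < 1)
    (h_le : ∀ z ∈ ball (0 : E) 1, ‖f z‖ ≤ A + B * (1 - ‖z‖) ^ (-α)) :
    Tendsto (fun z => (1 - ‖z‖) * ‖f z‖) (comap norm (𝓝[<] 1)) (𝓝 0) := by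
  have h_lt : ∀ᶠ z : E in comap norm (𝓝[<] 1), 0 < 1 - ‖z‖ :=
    (eventually_mem_nhdsWithin.comap _).mono fun z hz => sub_pos.2 hz
  have h_lim : Tendsto (fun t : ℝ => (1 - t) * A + B * (1 - t) ^ (1 - α)) (𝓝[<] 1) (𝓝 0) := by
    have h_cont : Continuous fun t : ℝ => (1 - t) * A + B * (1 - t) ^ (1 - α) :=
      ((continuous_const.sub continuous_id).mul_const A).add
        (((continuous_const.sub continuous_id).rpow_const
          fun _ => Or.inr (by linarith)).const_mul B)
    refine (h_cont.tendsto' 1 0 ?_).mono_left nhdsWithin_le_nhds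
    simp [Real.zero_rpow (sub_pos.2 hα).ne']
  refine squeeze_zero' (h_lt.mono fun z hz => by positivity) (h_lt.mono fun z hz => ?_)
    (h_lim.comp tendsto_comap)
  calc (1 - ‖z‖) * ‖f z‖ ≤ (1 - ‖z‖) * (A + B * (1 - ‖z‖) ^ (-α)) := by
        gcongr
        exact h_le z (mem_ball_zero_iff.2 (sub_pos.1 hz))
    _ = (1 - ‖z‖) * A + B * (1 - ‖z‖) ^ (1 - α) := by
        rw [sub_eq_add_neg 1 α, Real.rpow_add hz, Real.rpow_one]
        ring

end Growth

section Inversion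

variable {V : Type*} [NormedAddCommGroup V] [InnerProductSpace ℝ V]

lemma norm_inversion_zero_one (x : V) : ‖inversion 0 1 x‖ = ‖x‖⁻¹ := by
  simpa using dist_inversion_center (0 : V) x 1

lemma norm_sub_inversion_zero_one {x : V} (hx : 1 ≤ ‖x‖) :
    ‖x - inversion 0 1 x‖ = ‖x‖ - ‖x‖⁻¹ := by
  have : 0 < ‖x‖ := one_pos.trans_le hx
  have h_smul : x - inversion 0 1 x = (1 - (‖x‖ ^ 2)⁻¹) • x := by
    simp [inversion, sub_smul]
  have h_coeff : 0 ≤ 1 - (‖x‖ ^ 2)⁻¹ := sub_nonneg.2 (inv_le_one_of_one_le₀ (one_le_pow₀ hx))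
  rw [h_smul, norm_smul, Real.norm_of_nonneg h_coeff]
  field_simp

lemma inversion_zero_one_mem_ball {x : V} (hx : 1 < ‖x‖) : inversion 0 1 x ∈ ball (0 : V) 1 := by
  rw [mem_ball_zero_iff, norm_inversion_zero_one]
  exact inv_lt_one_of_one_lt₀ hx

lemma tendsto_inv_nhdsGT_one : Tendsto (fun r : ℝ => r⁻¹) (𝓝[>] 1) (𝓝[<] 1) := by
  refine tendsto_nhdsWithin_iff.2 ⟨?_, ?_⟩
  · simpa using (tendsto_inv₀ (one_ne_zero (α := ℝ))).mono_left nhdsWithin_le_nhds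
  · exact eventually_mem_nhdsWithin.mono fun r (hr : 1 < r) => inv_lt_one_of_one_lt₀ hr

lemma tendsto_inversion_zero_one_comap_norm :
    Tendsto (inversion 0 1) (comap norm (𝓝[>] 1)) (comap (norm : V → ℝ) (𝓝[<] 1)) := by
  rw [tendsto_comap_iff]
  exact (tendsto_inv_nhdsGT_one.comp tendsto_comap).congr fun x => (norm_inversion_zero_one x).symm

lemma tendsto_inversion_cobounded :
    Tendsto (inversion 0 1) (cobounded V) (𝓝 (0 : V)) := by
  rw [tendsto_zero_iff_norm_tendsto_zero]
  exact (tendsto_inv_atTop_zero.comp tendsto_norm_cobounded_atTop).congr fun x =>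
    (norm_inversion_zero_one x).symm

lemma abs_det_smul_reflection [FiniteDimensional ℝ V] (r : ℝ) (K : Submodule ℝ V) :
    |(r • (K.reflection : V →L[ℝ] V)).det| = |r| ^ Module.finrank ℝ V := by
  change |LinearMap.det (r • K.reflection.toLinearMap)| = _
  rw [LinearMap.det_smul, Submodule.det_reflection, abs_mul, abs_pow, abs_neg_one_pow, mul_one]

lemma lintegral_image_inversion [FiniteDimensional ℝ V] [MeasurableSpace V] [BorelSpace V]
    (μ : Measure V) [μ.IsAddHaarMeasure] {c : V} {R : ℝ} (hR : R ≠ 0) {s : Set V}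
    (hs : MeasurableSet s) (hc : c ∉ s) (h : V → ℝ≥0∞) :
    ∫⁻ x in inversion c R '' s, h x ∂μ =
      ∫⁻ x in s, ENNReal.ofReal ((R / dist x c) ^ (2 * Module.finrank ℝ V)) *
        h (inversion c R x) ∂μ := by
  rw [lintegral_image_eq_lintegral_abs_det_fderiv_mul μ hs
    (fun x hx => (hasFDerivAt_inversion (ne_of_mem_of_not_mem hx hc)).hasFDerivWithinAt)
    (inversion_injective c hR).injOn]
  simp only [abs_det_smul_reflection, abs_sq, pow_mul]

lemma inversion_zero_one_eq_inv_conj (z : ℂ) : inversion 0 1 z = (conj z)⁻¹ := by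
  rw [Complex.inv_def, normSq_conj, conj_conj, normSq_eq_norm_sq]
  simp [inversion, mul_comm]

lemma mobius_inversion (a : ℂ) {z : ℂ} (hz : z ≠ 0) :
    mobius a (inversion 0 1 z) = inversion 0 1 (mobius a z) := by
  have hc : conj z ≠ 0 := by simpa using hz
  simp only [inversion_zero_one_eq_inv_conj, mobius, map_div₀, map_sub, map_mul, map_one,
    conj_conj, inv_div]
  rw [← mul_div_mul_right _ _ hc, ← neg_div_neg_eq]
  congr 1 <;> · field_simp; ring

end Inversion

section Wirtinger

variable {g h : ℂ → ℂ} {z : ℂ}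

lemma dbar_add (hg : DifferentiableAt ℝ g z) (hh : DifferentiableAt ℝ h z) :
    dbar (fun w => g w + h w) z = dbar g z + dbar h z := by
  simp only [dbar, fderiv_fun_add hg hh, add_apply]
  ring

lemma dbar_sub (hg : DifferentiableAt ℝ g z) (hh : DifferentiableAt ℝ h z) :
    dbar (fun w => g w - h w) z = dbar g z - dbar h z := by
  simp only [dbar, fderiv_fun_sub hg hh, sub_apply]
  ring

lemma dbar_mul (hg : DifferentiableAt ℝ g z) (hh : DifferentiableAt ℝ h z) :
    dbar (fun w => g w * h w) z = g z * dbar h z + dbar g z * h z := by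
  simp only [dbar, fderiv_fun_mul hg hh, add_apply, smul_apply, smul_eq_mul]
  ring

lemma dbar_comp {G : ℂ → ℂ} (hG : DifferentiableAt ℂ G (h z)) (hh : DifferentiableAt ℝ h z) :
    dbar (fun w => G (h w)) z = deriv G (h z) * dbar h z := by
  have fderiv_comp (v : ℂ) :
      fderiv ℝ (fun w => G (h w)) z v = fderiv ℝ h z v * deriv G (h z) := by
    simpa [Function.comp_def] using DFunLike.congr_fun
      ((hG.hasDerivAt.hasFDerivAt.restrictScalars ℝ).comp z hh.hasFDerivAt).fderiv v
  simp only [dbar, fderiv_comp]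
  ring

lemma dbar_id : dbar (fun w => w) z = 0 := by
  simp [dbar]

lemma dbar_conj : dbar conj z = 1 := by
  have h_fderiv : fderiv ℝ conj z = (conjCLE : ℂ →L[ℝ] ℂ) := conjCLE.fderiv
  simp [dbar, h_fderiv, one_add_one_eq_two]

lemma dbar_inversion (hz : z ≠ 0) : dbar (inversion 0 1) z = -((conj z) ^ 2)⁻¹ := by
  have h_conj : conj z ≠ 0 := by simpa using hz
  rw [funext inversion_zero_one_eq_inv_conj,
    dbar_comp (differentiableAt_inv h_conj) conjCLE.differentiableAt, deriv_inv, dbar_conj, mul_one]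

end Wirtinger

/-- The pseudoanalytic extension of `F` across the unit circle: the value at `z` of the first-order
Taylor polynomial of `F` centred at the reflected point `z* = 1 / conj z`. -/
def reflectedTaylor (F : ℂ → ℂ) (z : ℂ) : ℂ :=
  F (inversion 0 1 z) + (z - inversion 0 1 z) * deriv F (inversion 0 1 z)

section ReflectedTaylor

variable {F : ℂ → ℂ}

lemma contDiffOn_comp_inversion {E : Type*} [NormedAddCommGroup E] [NormedSpace ℂ E]
    [CompleteSpace E] {G : ℂ → E} (hG : DifferentiableOn ℂ G (ball 0 1)) {k : ℕ∞} :
    ContDiffOn ℝ k (fun z => G (inversion 0 1 z)) {z : ℂ | 1 < ‖z‖} :=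
  ((hG.contDiffOn isOpen_ball).restrict_scalars ℝ).comp
    (contDiffOn_const.inversion contDiffOn_const contDiffOn_id
      fun _ hz => norm_pos_iff.1 (one_pos.trans hz))
    fun _ hz => inversion_zero_one_mem_ball hz

lemma contDiffOn_reflectedTaylor (hF : DifferentiableOn ℂ F (ball 0 1)) {k : ℕ∞} :
    ContDiffOn ℝ k (reflectedTaylor F) {z : ℂ | 1 < ‖z‖} :=
  (contDiffOn_comp_inversion hF).add
    ((contDiffOn_id.sub (contDiffOn_comp_inversion differentiableOn_id)).mul
      (contDiffOn_comp_inversion (hF.deriv isOpen_ball)))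

lemma dbar_reflectedTaylor (hF : DifferentiableOn ℂ F (ball 0 1)) {z : ℂ} (hz : 1 < ‖z‖) :
    dbar (reflectedTaylor F) z =
      (z - inversion 0 1 z) * (deriv (deriv F) (inversion 0 1 z) * -((conj z) ^ 2)⁻¹) := by
  have hz_ne : z ≠ 0 := norm_pos_iff.1 (one_pos.trans hz)
  have h_nhds : ball (0 : ℂ) 1 ∈ 𝓝 (inversion 0 1 z) :=
    isOpen_ball.mem_nhds (inversion_zero_one_mem_ball hz)
  have h_at : DifferentiableAt ℂ F (inversion 0 1 z) := hF.differentiableAt h_nhds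
  have h_deriv_at : DifferentiableAt ℂ (deriv F) (inversion 0 1 z) :=
    (hF.deriv isOpen_ball).differentiableAt h_nhds
  have h_inv : DifferentiableAt ℝ (inversion 0 1) z :=
    (hasFDerivAt_inversion hz_ne).differentiableAt
  have h_sub : DifferentiableAt ℝ (fun w => w - inversion 0 1 w) z :=
    differentiableAt_fun_id.sub h_inv
  have comp_inv {G : ℂ → ℂ} (hG : DifferentiableAt ℂ G (inversion 0 1 z)) :
      DifferentiableAt ℝ (fun w => G (inversion 0 1 w)) z :=
    (hG.restrictScalars ℝ).comp z h_inv
  unfold reflectedTaylor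
  rw [dbar_add (comp_inv h_at) (h_sub.fun_mul (comp_inv h_deriv_at)),
    dbar_mul h_sub (comp_inv h_deriv_at), dbar_sub differentiableAt_fun_id h_inv,
    dbar_comp h_at h_inv, dbar_comp h_deriv_at h_inv, dbar_id, dbar_inversion hz_ne]
  ring

lemma norm_dbar_reflectedTaylor (hF : DifferentiableOn ℂ F (ball 0 1)) {z : ℂ} (hz : 1 < ‖z‖) :
    ‖dbar (reflectedTaylor F) z‖ =
      (‖z‖ - ‖z‖⁻¹) / ‖z‖ ^ 2 * ‖deriv (deriv F) (inversion 0 1 z)‖ := by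
  rw [dbar_reflectedTaylor hF hz, norm_mul, norm_mul, norm_sub_inversion_zero_one hz.le, norm_neg,
    norm_inv, norm_pow, RCLike.norm_conj]
  ring

end ReflectedTaylor

section Morrey

variable {lam : ℝ} {f g : ℂ → ℂ}

lemma MemMorrey.congr (hf : MemMorrey lam f) (h_eq : EqOn f g (ball 0 1)) : MemMorrey lam g := by
  have deriv_eq : EqOn (deriv f) (deriv g) (ball 0 1) := h_eq.deriv isOpen_ball
  refine (iSup₂_mono fun a _ => ?_).trans_lt hf
  gcongr _ * ?_
  exact (setLIntegral_congr_fun measurableSet_ball fun z hz => by rw [deriv_eq hz]).ge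

lemma MemMorrey.lintegral_lt_top (hf : MemMorrey lam f) :
    ∫⁻ z in ball (0 : ℂ) 1, ENNReal.ofReal (‖deriv f z‖ ^ 2 * (1 - ‖z‖ ^ 2)) < ⊤ := by
  have h_zero := (le_iSup₂ 0 (mem_ball_self one_pos)).trans_lt hf
  simpa [mobius] using h_zero

lemma MemMorrey.exists_norm_deriv_le (hf : MemMorrey lam f)
    (hf_diff : DifferentiableOn ℂ f (ball 0 1)) :
    ∃ C : ℝ, ∀ z ∈ ball (0 : ℂ) 1, ‖deriv f z‖ ≤ C * (1 - ‖z‖) ^ (-(1 / 2) - 1 : ℝ) := by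
  obtain ⟨C, hC⟩ := exists_norm_pow_mul_one_sub_norm_pow_le (hf_diff.deriv isOpen_ball) 2 1
    (by simpa using hf.lintegral_lt_top)
  refine ⟨√C, fun z hz => ?_⟩
  have h_pos : 0 < 1 - ‖z‖ := sub_pos.2 (mem_ball_zero_iff.1 hz)
  have sqrt_cube : √((1 - ‖z‖) ^ 3) = (1 - ‖z‖) ^ (3 / 2 : ℝ) := by
    rw [Real.sqrt_eq_rpow, ← Real.rpow_natCast, ← Real.rpow_mul h_pos.le]
    norm_num
  rw [show (-(1 / 2) - 1 : ℝ) = -(3 / 2) by norm_num, Real.rpow_neg h_pos.le, ← div_eq_mul_inv,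
    le_div_iff₀ (by positivity), ← sqrt_cube, ← Real.sqrt_sq (norm_nonneg (deriv f z)),
    ← Real.sqrt_mul (by positivity)]
  exact Real.sqrt_le_sqrt (hC z hz)

lemma MemMorrey.tendsto_one_sub_norm_mul_norm (hf : MemMorrey lam f)
    (hf_diff : DifferentiableOn ℂ f (ball 0 1)) :
    Tendsto (fun z => (1 - ‖z‖) * ‖f z‖) (comap norm (𝓝[<] 1)) (𝓝 0) := by
  obtain ⟨C, hC⟩ := hf.exists_norm_deriv_le hf_diff
  exact tendsto_one_sub_norm_mul_norm_of_le (α := 1 / 2) (by norm_num)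
    (norm_le_add_rpow_of_norm_deriv_le_rpow hf_diff (by norm_num) hC)

end Morrey

section BoundaryValues

variable {G H : ℂ → ℂ} {Gb : ℝ → ℂ}

lemma RadialLimitIn.comp_inversion (hG : RadialLimitIn G Gb) :
    RadialLimitOut (fun z => G (inversion 0 1 z)) Gb := by
  filter_upwards [hG] with θ hθ
  refine (hθ.comp tendsto_inv_nhdsGT_one).congr fun r => ?_
  simp [inversion_zero_one_eq_inv_conj, mul_comm, ← Complex.exp_conj, Complex.exp_neg]

lemma RadialLimitOut.add_of_tendsto_zero (hG : RadialLimitOut G Gb)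
    (hH : Tendsto H (comap norm (𝓝[>] 1)) (𝓝 0)) : RadialLimitOut (fun z => G z + H z) Gb := by
  filter_upwards [hG] with θ hθ
  have tendsto_ray : Tendsto (fun r : ℝ => (r : ℂ) * Complex.exp ((θ : ℂ) * Complex.I))
      (𝓝[>] 1) (comap norm (𝓝[>] 1)) := by
    refine tendsto_comap_iff.2 (tendsto_id.congr' (eventually_mem_nhdsWithin.mono ?_))
    intro r (hr : 1 < r)
    simp [Complex.norm_exp_ofReal_mul_I, abs_of_pos (one_pos.trans hr)]
  simpa using hθ.add (hH.comp tendsto_ray)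

lemma radialLimitOut_reflectedTaylor {F : ℂ → ℂ} {Fb : ℝ → ℂ} (hF : RadialLimitIn F Fb)
    (h_deriv : Tendsto (fun z => (1 - ‖z‖) * ‖deriv F z‖) (comap norm (𝓝[<] 1)) (𝓝 0)) :
    RadialLimitOut (reflectedTaylor F) Fb := by
  refine hF.comp_inversion.add_of_tendsto_zero (tendsto_zero_iff_norm_tendsto_zero.2 ?_)
  have h_norm : Tendsto (fun z : ℂ => ‖z‖ + 1) (comap norm (𝓝[>] 1)) (𝓝 (1 + 1)) :=
    (tendsto_comap.mono_right nhdsWithin_le_nhds).add_const 1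
  have h_lim := h_norm.mul (h_deriv.comp tendsto_inversion_zero_one_comap_norm)
  rw [mul_zero] at h_lim
  refine h_lim.congr' ((eventually_mem_nhdsWithin.comap _).mono fun z (hz : 1 < ‖z‖) => ?_)
  have : 0 < ‖z‖ := one_pos.trans hz
  simp only [Function.comp_apply, norm_mul, norm_sub_inversion_zero_one hz.le,
    norm_inversion_zero_one]
  field_simp
  ring

end BoundaryValues

section GrowthAtInfinity

variable {F : ℂ → ℂ}

lemma bigOPow_of_isBigO {g : ℂ → ℂ} {m : ℕ} (hg : g =O[cobounded ℂ] fun z => z ^ m) :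
    BigOPow g m := by
  obtain ⟨C, hC, h_le⟩ := hg.exists_pos
  obtain ⟨R, -, hR⟩ := hasBasis_cobounded_norm.eventually_iff.1 h_le.bound
  exact ⟨C, max R 1, hC, by positivity, fun z hz => by
    simpa using hR (mem_ofPred.2 ((le_max_left R 1).trans hz))⟩

lemma isBigO_comp_inversion {G : ℂ → ℂ} (hG : ContinuousAt G 0) (m : ℕ) :
    (fun z => G (inversion 0 1 z)) =O[cobounded ℂ] fun z => z ^ m := by
  have h_one := (hG.tendsto.comp tendsto_inversion_cobounded).isBigO_one ℂ
  exact h_one.trans (by simpa using isBigO_pow_pow_cobounded_of_le (R := ℂ) m.zero_le)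

lemma bigOPow_reflectedTaylor (hF : DifferentiableOn ℂ F (ball 0 1)) {n : ℕ} (hn : 1 ≤ n) :
    BigOPow (reflectedTaylor F) n := by
  have h_nhds : ball (0 : ℂ) 1 ∈ 𝓝 0 := ball_mem_nhds 0 one_pos
  have h_sub : (fun z : ℂ => z - inversion 0 1 z) =O[cobounded ℂ] fun z => z ^ 1 := by
    simpa using (isBigO_refl (fun z : ℂ => z) _).sub
      (by simpa using isBigO_comp_inversion continuousAt_id 1)
  have h_linear : reflectedTaylor F =O[cobounded ℂ] fun z => z ^ 1 := by
    refine (isBigO_comp_inversion (hF.differentiableAt h_nhds).continuousAt 1).add ?_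
    simpa using h_sub.mul (isBigO_comp_inversion
      ((hF.deriv isOpen_ball).differentiableAt h_nhds).continuousAt 0)
  exact bigOPow_of_isBigO (h_linear.trans (isBigO_pow_pow_cobounded_of_le hn))

lemma bigOPow_dbar_reflectedTaylor (hF : DifferentiableOn ℂ F (ball 0 1)) (m : ℕ) :
    BigOPow (dbar (reflectedTaylor F)) m := by
  have h_cont : ContinuousAt (deriv (deriv F)) 0 :=
    (((hF.deriv isOpen_ball).deriv isOpen_ball).differentiableAt
      (ball_mem_nhds 0 one_pos)).continuousAt
  refine bigOPow_of_isBigO (IsBigO.trans ?_ (isBigO_comp_inversion h_cont m))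
  refine IsBigO.of_bound' ?_
  filter_upwards [tendsto_norm_cobounded_atTop.eventually_gt_atTop 1] with z hz
  rw [norm_dbar_reflectedTaylor hF hz]
  refine mul_le_of_le_one_left (norm_nonneg _) ((div_le_one (by positivity)).2 ?_)
  nlinarith [inv_pos.2 (one_pos.trans hz)]

end GrowthAtInfinity

section CarlesonIntegral

variable {F : ℂ → ℂ} {n : ℕ}

lemma sub_inv_le_pow_sub_one {t : ℝ} (ht : 1 ≤ t) (hn : 2 ≤ n) : t - t⁻¹ ≤ t ^ n - 1 := by
  have ht_ne : t ≠ 0 := (one_pos.trans_le ht).ne'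
  calc t - t⁻¹ = (t ^ 2 - 1) / t := by field_simp
    _ ≤ t ^ 2 - 1 := div_le_self (sub_nonneg.2 (one_le_pow₀ ht)) ht
    _ ≤ t ^ n - 1 := by gcongr

lemma norm_dbar_reflectedTaylor_div_le (hF : DifferentiableOn ℂ F (ball 0 1)) (hn : 2 ≤ n)
    {z : ℂ} (hz : 1 < ‖z‖) :
    ‖dbar (reflectedTaylor F) z‖ / (‖z‖ ^ n - 1) ≤
      (1 / ‖z‖) ^ 2 * ‖deriv (deriv F) (inversion 0 1 z)‖ := by
  have h_pow : 0 < ‖z‖ ^ n - 1 := sub_pos.2 (one_lt_pow₀ hz (by lia))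
  rw [norm_dbar_reflectedTaylor hF hz, div_le_iff₀ h_pow]
  calc (‖z‖ - ‖z‖⁻¹) / ‖z‖ ^ 2 * ‖deriv (deriv F) (inversion 0 1 z)‖
      ≤ (‖z‖ ^ n - 1) / ‖z‖ ^ 2 * ‖deriv (deriv F) (inversion 0 1 z)‖ := by
        gcongr ?_ / _ * _
        exact sub_inv_le_pow_sub_one hz.le hn
    _ = (1 / ‖z‖) ^ 2 * ‖deriv (deriv F) (inversion 0 1 z)‖ * (‖z‖ ^ n - 1) := by ring

lemma lintegral_dbar_reflectedTaylor_le (hF : DifferentiableOn ℂ F (ball 0 1)) (hn : 2 ≤ n)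
    (a : ℂ) :
    ∫⁻ z in {z : ℂ | 1 < ‖z‖}, ENNReal.ofReal (‖dbar (reflectedTaylor F) z‖ ^ 2 /
        (‖z‖ ^ n - 1) ^ 2 * (1 - 1 / ‖mobius a z‖ ^ 2)) ≤
      ∫⁻ z in ball (0 : ℂ) 1,
        ENNReal.ofReal (‖deriv (deriv F) z‖ ^ 2 * (1 - ‖mobius a z‖ ^ 2)) := by
  have h_meas : MeasurableSet {z : ℂ | 1 < ‖z‖} :=
    (isOpen_lt continuous_const continuous_norm).measurableSet
  have h_image : inversion 0 1 '' {z : ℂ | 1 < ‖z‖} ⊆ ball 0 1 :=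
    image_subset_iff.2 fun z hz => inversion_zero_one_mem_ball hz
  refine le_trans ?_ (lintegral_mono_set h_image)
  rw [lintegral_image_inversion volume one_ne_zero h_meas (by simp)]
  refine setLIntegral_mono' h_meas fun z (hz : 1 < ‖z‖) => ?_
  have hz_ne : z ≠ 0 := norm_pos_iff.1 (one_pos.trans hz)
  have h_pow : 0 < ‖z‖ ^ n - 1 := sub_pos.2 (one_lt_pow₀ hz (by lia))
  rw [mobius_inversion a hz_ne, norm_inversion_zero_one, inv_pow, ← one_div,
    ← ENNReal.ofReal_mul (by positivity), ← mul_assoc,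
    ENNReal.ofReal_mul (q := 1 - 1 / ‖mobius a z‖ ^ 2) (by positivity),
    ENNReal.ofReal_mul (q := 1 - 1 / ‖mobius a z‖ ^ 2) (by positivity)]
  gcongr ENNReal.ofReal ?_ * _
  rw [← div_pow, dist_zero_right, Complex.finrank_real_complex, pow_mul, ← mul_pow]
  gcongr
  exact norm_dbar_reflectedTaylor_div_le hF hn hz

end CarlesonIntegral

theorem morrey_implies_pseudoanalytic_extension_general
    (lam : ℝ) (n : ℕ) (hn : 2 ≤ n) (F : ℂ → ℂ)
    (hF : DifferentiableOn ℂ F (ball (0 : ℂ) 1))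
    (hF_morrey : MemMorrey lam (deriv F))
    (Fstar : ℝ → ℂ)
    (hFb : RadialLimitIn F Fstar) :
    ∃ Ftil : ℂ → ℂ,
      ContDiffOn ℝ 1 Ftil {z : ℂ | 1 < ‖z‖} ∧
      RadialLimitOut Ftil Fstar ∧
      BigOPow Ftil n ∧
      BigOPow (dbar Ftil) (n - 2) ∧
      (⨆ a ∈ ball (0 : ℂ) 1, ENNReal.ofReal ((1 - ‖a‖ ^ 2) ^ (1 - lam)) *
        ∫⁻ z in {z : ℂ | 1 < ‖z‖},
          ENNReal.ofReal (‖dbar Ftil z‖ ^ 2 / (‖z‖ ^ n - 1) ^ 2 *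
            (1 - 1 / ‖mobius a z‖ ^ 2))) < ⊤ := by
  refine ⟨reflectedTaylor F, contDiffOn_reflectedTaylor hF, ?_,
    bigOPow_reflectedTaylor hF (by lia), bigOPow_dbar_reflectedTaylor hF (n - 2), ?_⟩
  · exact radialLimitOut_reflectedTaylor hFb
      (hF_morrey.tendsto_one_sub_norm_mul_norm (hF.deriv isOpen_ball))
  · refine (iSup₂_mono fun a _ => ?_).trans_lt hF_morrey
    gcongr _ * ?_
    exact lintegral_dbar_reflectedTaylor_le hF hn a

/-- Theorem 3.2, (i) ⇒ (ii): a function in the analytic Morrey space `𝓛^{2,λ}`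
admits a pseudoanalytic extension of its primitive. -/
theorem morrey_implies_pseudoanalytic_extension
    (lam : ℝ) (hlam0 : 0 < lam) (hlam1 : lam ≤ 1)
    (n : ℕ) (hn : 2 ≤ n)
    (f F : ℂ → ℂ)
    (hf : DifferentiableOn ℂ f (ball (0 : ℂ) 1))
    (hfM : MemMorrey lam f)
    (hF0 : F 0 = 0)
    (hFprim : ∀ z ∈ ball (0 : ℂ) 1, HasDerivAt F (f z) z)
    (hFH2 : MemH2 F)
    (Fstar : ℝ → ℂ)
    (hFb : RadialLimitIn F Fstar) :
    ∃ Ftil : ℂ → ℂ,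
      ContDiffOn ℝ 1 Ftil {z : ℂ | 1 < ‖z‖} ∧
      RadialLimitOut Ftil Fstar ∧
      BigOPow Ftil n ∧
      BigOPow (dbar Ftil) (n - 2) ∧
      (⨆ a ∈ ball (0 : ℂ) 1, ENNReal.ofReal ((1 - ‖a‖ ^ 2) ^ (1 - lam)) *
        ∫⁻ z in {z : ℂ | 1 < ‖z‖},
          ENNReal.ofReal (‖dbar Ftil z‖ ^ 2 / (‖z‖ ^ n - 1) ^ 2 *
            (1 - 1 / ‖mobius a z‖ ^ 2))) < ⊤ := by
  exact morrey_implies_pseudoanalytic_extension_general lam n hn F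
    (fun z hz => (hFprim z hz).differentiableAt.differentiableWithinAt)
    (hfM.congr fun z hz => (hFprim z hz).deriv.symm) Fstar hFb

end
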